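/- (Algebraic core of Proposition 3.1.) Let α be an alternating p-form on Q with 1 ≤ p ≤ q, and suppose that Σ_{i,j=1}^q Ric^∇_{ij}·⟨e_i⌟α, e_j⌟α⟩ − (1/2)·Σ_{i,j,k,l=1}^q R^∇_{ijkl}·⟨(e_j∧e_i)⌟α, (e_l∧e_k)⌟α⟩ = 0 (this vanishing holds for the transverse Weitzenböck curvature term when α is a parallel basic form of a Riemannian foliation). Then 0 ≤ −Σ_{i,j,l=1}^q R_{lilj}·⟨e_i⌟α, e_j⌟α⟩ + (1/2)·Σ_{i,j,k,l=1}^q R_{ijkl}·⟨(e_j∧e_i)⌟α, (e_l∧e_k)⌟α⟩ + Σ_{s=1}^r [ |(Σ_{i=1}^q A_{e_i}V_s ∧ e_i)⌟α|² − 2·Σ_{i=1}^q |A_{e_i}V_s ⌟ α|² ]. -/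

import Mathlib

open scoped BigOperators RealInnerProductSpace

variable {Q : Type*} [NormedAddCommGroup Q] [InnerProductSpace ℝ Q]

/-- Inner product of two `p`-forms with respect to an orthonormal frame `e`:
`⟨α,β⟩ = (1/p!) ∑_{i₁,…,i_p} α(e_{i₁},…,e_{i_p}) β(e_{i₁},…,e_{i_p})`. -/
noncomputable def formInner {q p : ℕ} (e : Fin q → Q)
    (α β : AlternatingMap ℝ Q ℝ (Fin p)) : ℝ :=
  (1 / (Nat.factorial p : ℝ)) * ∑ f : Fin p → Fin q, α (e ∘ f) * β (e ∘ f)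

/-- Interior product `X ⌟ α` of a vector with a `p`-form (zero when `p = 0`).
The interior product with a decomposable `2`-vector is then `(X∧Y)⌟α = X⌟(Y⌟α)`,
i.e. `((X∧Y)⌟α)(Z₁,…) = α(Y,X,Z₁,…)`. -/
noncomputable def iprod : ∀ {p : ℕ}, Q → AlternatingMap ℝ Q ℝ (Fin p) →
    AlternatingMap ℝ Q ℝ (Fin (p - 1))
  | 0, _, _ => 0
  | _ + 1, X, α => α.curryLeft X

/-- O'Neill's formula for the transverse curvature:
`R^∇_{ijkl} = R_{ijkl} + 2⟨A_{e_i}e_j, A_{e_k}e_l⟩ − ⟨A_{e_j}e_k, A_{e_i}e_l⟩ − ⟨A_{e_k}e_i, A_{e_j}e_l⟩`. -/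
noncomputable def Rnab {q : ℕ} {L : Type*} [NormedAddCommGroup L] [InnerProductSpace ℝ L]
    (e : Fin q → Q) (R : Fin q → Fin q → Fin q → Fin q → ℝ)
    (A : Q →ₗ[ℝ] Q →ₗ[ℝ] L) (i j k l : Fin q) : ℝ :=
  R i j k l + 2 * ⟪A (e i) (e j), A (e k) (e l)⟫
    - ⟪A (e j) (e k), A (e i) (e l)⟫ - ⟪A (e k) (e i), A (e j) (e l)⟫

/-- O'Neill's formula for the transverse Ricci curvature:
`Ric^∇_{ij} = ∑_l (R_{lilj} + 2⟨A_{e_l}e_i, A_{e_l}e_j⟩ − ⟨A_{e_i}e_l, A_{e_l}e_j⟩)`. -/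
noncomputable def Ricnab {q : ℕ} {L : Type*} [NormedAddCommGroup L] [InnerProductSpace ℝ L]
    (e : Fin q → Q) (R : Fin q → Fin q → Fin q → Fin q → ℝ)
    (A : Q →ₗ[ℝ] Q →ₗ[ℝ] L) (i j : Fin q) : ℝ :=
  ∑ l : Fin q, (R l i l j + 2 * ⟪A (e l) (e i), A (e l) (e j)⟫
    - ⟪A (e i) (e l), A (e l) (e j)⟫)

lemma iprod_succ {p : ℕ} (X : Q) (α : AlternatingMap ℝ Q ℝ (Fin (p+1))) (v : Fin p → Q) :
    iprod X α v = α (Matrix.vecCons X v) := rfl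

lemma iprod_sum_smul {ι : Type*} [Fintype ι] {p : ℕ} (c : ι → ℝ) (x : ι → Q)
    (α : AlternatingMap ℝ Q ℝ (Fin p)) :
    iprod (∑ j, c j • x j) α = ∑ j, c j • iprod (x j) α := by
  cases p with
  | zero => simp [iprod]
  | succ p => simp [iprod, map_sum, map_smul]

lemma altForm_sum_apply {ι : Type*} [Fintype ι] {p : ℕ}
    (α : ι → AlternatingMap ℝ Q ℝ (Fin p)) (v : Fin p → Q) :
    (∑ i, α i) v = ∑ i, α i v := by
  classical
  have : ∀ s : Finset ι, (∑ i ∈ s, α i) v = ∑ i ∈ s, α i v := by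
    intro s
    induction s using Finset.induction_on with
    | empty => simp
    | insert a s ha ih => simp [Finset.sum_insert ha, ih]
  exact this _

lemma formInner_sum_sum {ι κ : Type*} [Fintype ι] [Fintype κ] {q p : ℕ} (e : Fin q → Q)
    (a : ι → ℝ) (b : κ → ℝ)
    (α : ι → AlternatingMap ℝ Q ℝ (Fin p)) (β : κ → AlternatingMap ℝ Q ℝ (Fin p)) :
    formInner e (∑ i, a i • α i) (∑ k, b k • β k)
      = ∑ i, ∑ k, a i * b k * formInner e (α i) (β k) := by
  unfold formInner
  simp only [altForm_sum_apply, AlternatingMap.smul_apply, Finset.sum_mul_sum, smul_eq_mul]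
  rw [Finset.sum_comm, Finset.mul_sum]
  refine Finset.sum_congr rfl fun i _ => ?_
  rw [Finset.sum_comm, Finset.mul_sum]
  refine Finset.sum_congr rfl fun k _ => ?_
  rw [Finset.mul_sum, Finset.mul_sum, Finset.mul_sum]
  refine Finset.sum_congr rfl fun f _ => ?_
  ring

lemma iprod_anti {p : ℕ} (X Y : Q) (α : AlternatingMap ℝ Q ℝ (Fin p)) :
    iprod X (iprod Y α) = - iprod Y (iprod X α) := by
  match p with
  | 0 => simp [iprod]
  | 1 => simp [iprod]
  | p + 2 =>
    ext v
    rw [AlternatingMap.neg_apply]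
    change α (Matrix.vecCons Y (Matrix.vecCons X v)) = - α (Matrix.vecCons X (Matrix.vecCons Y v))
    rw [← AlternatingMap.map_swap α _ (show (0 : Fin (p+2)) ≠ 1 by simp)]
    congr 1
    ext i
    refine Fin.cases ?_ (fun i => Fin.cases ?_ (fun i => ?_) i) i
    · simp
    · simp
    · simp only [Function.comp]
      rw [Equiv.swap_apply_of_ne_of_ne]
      · simp
      · simp
      · simp [Fin.ext_iff]

lemma formInner_neg_left {q p : ℕ} (e : Fin q → Q) (α β : AlternatingMap ℝ Q ℝ (Fin p)) :
    formInner e (-α) β = - formInner e α β := by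
  simp [formInner]

/-- the `m`-th summand of the derivation induced by the matrix `c`. -/
noncomputable def dterm {q p : ℕ} (e : Fin q → Q) (c : Fin q → Fin q → ℝ)
    (α : AlternatingMap ℝ Q ℝ (Fin p)) (m : Fin p) (f : Fin p → Fin q) : ℝ :=
  ∑ j, c (f m) j * α (e ∘ Function.update f m j)

lemma dterm_perm {q p : ℕ} (e : Fin q → Q) (c : Fin q → Fin q → ℝ)
    (α : AlternatingMap ℝ Q ℝ (Fin p)) (σ : Equiv.Perm (Fin p)) (m : Fin p)
    (f : Fin p → Fin q) :
    dterm e c α m (f ∘ σ) = ((Equiv.Perm.sign σ : ℤ) : ℝ) * dterm e c α (σ m) f := by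
  unfold dterm
  rw [Finset.mul_sum]
  refine Finset.sum_congr rfl fun j _ => ?_
  have h : Function.update (f ∘ σ) m j = (Function.update f (σ m) j) ∘ σ := by
    rw [Function.update_comp_equiv]; simp
  rw [h, ← Function.comp_assoc, AlternatingMap.map_perm]
  simp only [Function.comp, Units.smul_def, zsmul_eq_mul]
  ring

lemma dterm_pair {q p : ℕ} (e : Fin q → Q) (c : Fin q → Fin q → ℝ)
    (α : AlternatingMap ℝ Q ℝ (Fin p)) (σ : Equiv.Perm (Fin p)) (m n : Fin p) :
    ∑ f, dterm e c α (σ m) f * dterm e c α (σ n) f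
      = ∑ f, dterm e c α m f * dterm e c α n f := by
  rw [← Equiv.sum_comp (Equiv.arrowCongr σ.symm (Equiv.refl (Fin q)))
    (fun f => dterm e c α m f * dterm e c α n f)]
  refine Finset.sum_congr rfl fun f _ => ?_
  have h : (Equiv.arrowCongr σ.symm (Equiv.refl (Fin q))) f = f ∘ σ := by
    ext i; simp
  rw [h, dterm_perm, dterm_perm]
  have h2 : ((Equiv.Perm.sign σ : ℤ) : ℝ) * ((Equiv.Perm.sign σ : ℤ) : ℝ) = 1 := by
    rcases Int.units_eq_one_or (Equiv.Perm.sign σ) with h | h <;> simp [h]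
  linear_combination (-(dterm e c α (σ m) f * dterm e c α (σ n) f)) * h2

lemma sum_cons {q p : ℕ} (F : (Fin (p+1) → Fin q) → ℝ) :
    ∑ f, F f = ∑ i, ∑ g : Fin p → Fin q, F (Fin.cons i g) := by
  rw [← Fintype.sum_prod_type']
  exact (Equiv.sum_comp (Fin.consEquiv (fun _ => Fin q)) F).symm

lemma diag_eq {q p : ℕ} (e : Fin q → Q) (c : Fin q → Fin q → ℝ)
    (α : AlternatingMap ℝ Q ℝ (Fin (p+1))) :
    ∑ f, dterm e c α 0 f * dterm e c α 0 f
      = (p.factorial : ℝ) * ∑ i, ∑ j, ∑ l, c i j * c i l *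
          formInner e (iprod (e j) α) (iprod (e l) α) := by
  have hf : (p.factorial : ℝ) ≠ 0 := by positivity
  rw [sum_cons, Finset.mul_sum]
  refine Finset.sum_congr rfl fun i _ => ?_
  simp only [dterm, Finset.sum_mul_sum, Fin.update_cons_zero, Fin.cons_zero]
  rw [Finset.sum_comm, Finset.mul_sum]
  refine Finset.sum_congr rfl fun j _ => ?_
  rw [Finset.sum_comm, Finset.mul_sum]
  refine Finset.sum_congr rfl fun l _ => ?_
  unfold formInner
  change _ = (p.factorial : ℝ) * (c i j * c i l * ((1 / (p.factorial : ℝ)) *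
    ∑ g : Fin p → Fin q, α (Matrix.vecCons (e j) (e ∘ g)) * α (Matrix.vecCons (e l) (e ∘ g))))
  have h : ∀ (x y : ℝ), (p.factorial : ℝ) * (x * ((1 / (p.factorial : ℝ)) * y)) = x * y := by
    intro x y; field_simp
  rw [h, Finset.mul_sum]
  refine Finset.sum_congr rfl fun g _ => ?_
  have hc : ∀ j, e ∘ (Fin.cons j g : Fin (p+1) → Fin q) = Matrix.vecCons (e j) (e ∘ g) := by
    intro j; ext i; refine Fin.cases ?_ (fun i => ?_) i <;> simp
  rw [hc, hc]; ring

lemma offdiag_eq {q p : ℕ} (e : Fin q → Q) (c : Fin q → Fin q → ℝ)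
    (α : AlternatingMap ℝ Q ℝ (Fin (p+2))) :
    ∑ f, dterm e c α 0 f * dterm e c α 1 f
      = (p.factorial : ℝ) * ∑ i, ∑ j, ∑ k, ∑ l, c i j * c k l *
          formInner e (iprod (e k) (iprod (e j) α)) (iprod (e l) (iprod (e i) α)) := by
  have hf : (p.factorial : ℝ) ≠ 0 := by positivity
  have hu : ∀ (i k l : Fin q) (g : Fin p → Fin q),
      Function.update (Fin.cons i (Fin.cons k g : Fin (p+1) → Fin q) : Fin (p+2) → Fin q) 1 l
        = Fin.cons i (Fin.cons l g : Fin (p+1) → Fin q) := by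
    intro i k l g
    have := Fin.cons_update (α := fun _ => Fin q) i (Fin.cons k g : Fin (p+1) → Fin q) 0 l
    rw [Fin.update_cons_zero] at this
    exact this.symm
  have h1 : ∀ (i k : Fin q) (g : Fin p → Fin q),
      (Fin.cons i (Fin.cons k g : Fin (p+1) → Fin q) : Fin (p+2) → Fin q) 1 = k := fun _ _ _ => rfl
  rw [sum_cons, Finset.mul_sum]
  refine Finset.sum_congr rfl fun i _ => ?_
  rw [sum_cons]
  simp only [dterm, Finset.sum_mul_sum, Fin.update_cons_zero, Fin.cons_zero, hu, h1]
  rw [Finset.sum_comm (s := (Finset.univ : Finset (Fin q))) (f := fun j k => ∑ l, c i j * c k l *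
    formInner e (iprod (e k) (iprod (e j) α)) (iprod (e l) (iprod (e i) α))), Finset.mul_sum]
  refine Finset.sum_congr rfl fun k _ => ?_
  rw [Finset.sum_comm, Finset.mul_sum]
  refine Finset.sum_congr rfl fun j _ => ?_
  rw [Finset.sum_comm, Finset.mul_sum]
  refine Finset.sum_congr rfl fun l _ => ?_
  unfold formInner
  change _ = (p.factorial : ℝ) * (c i j * c k l * ((1 / (p.factorial : ℝ)) *
    ∑ g : Fin p → Fin q, α (Matrix.vecCons (e j) (Matrix.vecCons (e k) (e ∘ g)))
      * α (Matrix.vecCons (e i) (Matrix.vecCons (e l) (e ∘ g)))))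
  have h : ∀ (x y : ℝ), (p.factorial : ℝ) * (x * ((1 / (p.factorial : ℝ)) * y)) = x * y := by
    intro x y; field_simp
  rw [h, Finset.mul_sum]
  refine Finset.sum_congr rfl fun g _ => ?_
  have hc : ∀ (n : ℕ) (j : Fin q) (g : Fin n → Fin q),
      e ∘ (Fin.cons j g : Fin (n+1) → Fin q) = Matrix.vecCons (e j) (e ∘ g) := by
    intro n j g; ext i; refine Fin.cases ?_ (fun i => ?_) i <;> simp
  rw [hc, hc, hc, hc]; ring

lemma key_nonneg {q p : ℕ} (hp : 1 ≤ p) (e : Fin q → Q) (c : Fin q → Fin q → ℝ)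
    (α : AlternatingMap ℝ Q ℝ (Fin p)) :
    0 ≤ (∑ i, ∑ j, ∑ l, c i j * c i l * formInner e (iprod (e j) α) (iprod (e l) α))
      + ∑ i, ∑ j, ∑ k, ∑ l, c i j * c k l *
          formInner e (iprod (e k) (iprod (e j) α)) (iprod (e l) (iprod (e i) α)) := by
  match p, hp with
  | 1, _ =>
    have h2 : (∑ i, ∑ j, ∑ k, ∑ l, c i j * c k l *
          formInner e (iprod (e k) (iprod (e j) α)) (iprod (e l) (iprod (e i) α))) = 0 := by
      simp [iprod, formInner]
    have h1 := diag_eq e c α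
    have h0 : 0 ≤ ∑ f, dterm e c α 0 f * dterm e c α 0 f :=
      Finset.sum_nonneg fun f _ => mul_self_nonneg _
    rw [h2, add_zero]
    rw [h1] at h0
    simpa using h0
  | p + 2, _ =>
    have h1 := diag_eq e c α
    have h2 := offdiag_eq e c α
    set T := (∑ i, ∑ j, ∑ l, c i j * c i l * formInner e (iprod (e j) α) (iprod (e l) α)) with hT
    set Y := ∑ i, ∑ j, ∑ k, ∑ l, c i j * c k l *
          formInner e (iprod (e k) (iprod (e j) α)) (iprod (e l) (iprod (e i) α)) with hY
    have h0 : 0 ≤ ∑ f, (∑ m, dterm e c α m f) * (∑ m, dterm e c α m f) :=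
      Finset.sum_nonneg fun f _ => mul_self_nonneg _
    have hd : ∀ m, ∑ f, dterm e c α m f * dterm e c α m f
        = ∑ f, dterm e c α 0 f * dterm e c α 0 f := by
      intro m
      have := dterm_pair e c α (Equiv.swap 0 m) 0 0
      simpa using this
    have ho : ∀ m n, m ≠ n → ∑ f, dterm e c α m f * dterm e c α n f
        = ∑ f, dterm e c α 0 f * dterm e c α 1 f := by
      intro m n hmn
      obtain ⟨σ, h0, h1⟩ : ∃ σ : Equiv.Perm (Fin (p+2)), σ 0 = m ∧ σ 1 = n := by
        refine ⟨(Equiv.swap 0 m).trans (Equiv.swap ((Equiv.swap 0 m) 1) n), ?_, ?_⟩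
        · simp only [Equiv.trans_apply, Equiv.swap_apply_left]
          apply Equiv.swap_apply_of_ne_of_ne _ hmn
          intro h
          have h' : (Equiv.swap 0 m) 0 = (Equiv.swap 0 m) 1 := by
            rw [← h]; simp
          simpa using (Equiv.swap 0 m).injective h'
        · simp
      have := dterm_pair e c α σ 0 1
      rwa [h0, h1] at this
    have hs : ∑ f, (∑ m, dterm e c α m f) * (∑ m, dterm e c α m f)
        = ∑ m, ∑ n, ∑ f, dterm e c α m f * dterm e c α n f := by
      simp only [Finset.sum_mul_sum]
      rw [Finset.sum_comm]
      refine Finset.sum_congr rfl fun m _ => ?_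
      rw [Finset.sum_comm]
    have hr : ∀ m, ∑ n, ∑ f, dterm e c α m f * dterm e c α n f
        = ((p+1).factorial : ℝ) * (T + Y) := by
      intro m
      rw [← Finset.add_sum_erase _ _ (Finset.mem_univ m), hd, h1,
        Finset.sum_congr rfl (fun n hn => ho m n (Finset.ne_of_mem_erase hn).symm), h2]
      simp [Finset.card_erase_of_mem, Nat.factorial_succ]
      ring
    rw [hs, Finset.sum_congr rfl (fun m _ => hr m)] at h0
    simp only [Finset.sum_const, Finset.card_univ, Fintype.card_fin, nsmul_eq_mul, ← mul_assoc] at h0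
    exact nonneg_of_mul_nonneg_right h0 (by positivity)

lemma sum3_swap {q r : ℕ} (F : Fin r → Fin q → Fin q → Fin q → ℝ) :
    ∑ i, ∑ j, ∑ k, ∑ s, F s i j k = ∑ s, ∑ i, ∑ j, ∑ k, F s i j k := by
  rw [Finset.sum_comm (s := (Finset.univ : Finset (Fin r)))]
  refine Finset.sum_congr rfl fun i _ => ?_
  rw [Finset.sum_comm (s := (Finset.univ : Finset (Fin r)))]
  refine Finset.sum_congr rfl fun j _ => ?_
  rw [Finset.sum_comm]

lemma sum4_swap {q r : ℕ} (F : Fin r → Fin q → Fin q → Fin q → Fin q → ℝ) :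
    ∑ i, ∑ j, ∑ k, ∑ l, ∑ s, F s i j k l = ∑ s, ∑ i, ∑ j, ∑ k, ∑ l, F s i j k l := by
  rw [Finset.sum_comm (s := (Finset.univ : Finset (Fin r)))]
  refine Finset.sum_congr rfl fun i _ => ?_
  rw [← sum3_swap]

lemma rot3 {q : ℕ} (F : Fin q → Fin q → Fin q → ℝ) :
    ∑ i, ∑ j, ∑ l, F i j l = ∑ l, ∑ i, ∑ j, F i j l := by
  rw [Finset.sum_comm (s := (Finset.univ : Finset (Fin q))) (f := fun l i => ∑ j, F i j l)]
  refine Finset.sum_congr rfl fun i _ => ?_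
  rw [Finset.sum_comm]

lemma alg_core {q r : ℕ} (c : Fin r → Fin q → Fin q → ℝ) (hc : ∀ s i j, c s i j = - c s j i)
    (R : Fin q → Fin q → Fin q → Fin q → ℝ) (G : Fin q → Fin q → ℝ)
    (H : Fin q → Fin q → Fin q → Fin q → ℝ) (hH : ∀ i j k l, H i j k l = - H j i k l)
    (hv : (∑ i, ∑ j, (∑ l, (R l i l j + 2 * (∑ s, c s l i * c s l j)
          - (∑ s, c s i l * c s l j))) * G i j)
        - (1 / 2 : ℝ) * ∑ i, ∑ j, ∑ k, ∑ l, (R i j k l + 2 * (∑ s, c s i j * c s k l)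
            - (∑ s, c s j k * c s i l) - (∑ s, c s k i * c s j l)) * H i j k l = 0)
    (hk : ∀ s, 0 ≤ (∑ i, ∑ j, ∑ l, c s i j * c s i l * G j l)
      + ∑ i, ∑ j, ∑ k, ∑ l, c s i j * c s k l * H j k i l) :
    0 ≤ -(∑ i, ∑ j, ∑ l, R l i l j * G i j)
        + (1 / 2 : ℝ) * ∑ i, ∑ j, ∑ k, ∑ l, R i j k l * H i j k l
        + ∑ s, ((∑ i, ∑ j, ∑ k, ∑ l, c s i j * c s k l * H i j k l)
            - 2 * ∑ i, ∑ j, ∑ l, c s i j * c s i l * G j l) := by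
  have e1 : (∑ i, ∑ j, (∑ l, (R l i l j + 2 * (∑ s, c s l i * c s l j)
          - (∑ s, c s i l * c s l j))) * G i j)
      = (∑ i, ∑ j, ∑ l, R l i l j * G i j)
        + 3 * ∑ s, ∑ i, ∑ j, ∑ l, c s i j * c s i l * G j l := by
    rw [← sum3_swap (fun s i j l => c s i j * c s i l * G j l),
      ← rot3 (fun j l i => ∑ s, c s i j * c s i l * G j l)]
    simp only [Finset.mul_sum, ← Finset.sum_add_distrib, Finset.sum_mul]
    refine Finset.sum_congr rfl fun i _ => Finset.sum_congr rfl fun j _ =>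
      Finset.sum_congr rfl fun l _ => ?_
    rw [add_sub_assoc, add_mul, ← Finset.sum_sub_distrib, Finset.sum_mul]
    congr 1
    refine Finset.sum_congr rfl fun s _ => ?_
    rw [hc s i l]; ring
  have e2 : (∑ i, ∑ j, ∑ k, ∑ l, (R i j k l + 2 * (∑ s, c s i j * c s k l)
            - (∑ s, c s j k * c s i l) - (∑ s, c s k i * c s j l)) * H i j k l)
      = (∑ i, ∑ j, ∑ k, ∑ l, R i j k l * H i j k l)
        + 2 * (∑ s, ∑ i, ∑ j, ∑ k, ∑ l, c s i j * c s k l * H i j k l)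
        - (∑ s, ∑ i, ∑ j, ∑ k, ∑ l, c s j k * c s i l * H i j k l)
        - (∑ s, ∑ i, ∑ j, ∑ k, ∑ l, c s k i * c s j l * H i j k l) := by
    rw [← sum4_swap (fun s i j k l => c s i j * c s k l * H i j k l),
      ← sum4_swap (fun s i j k l => c s j k * c s i l * H i j k l),
      ← sum4_swap (fun s i j k l => c s k i * c s j l * H i j k l)]
    simp only [Finset.mul_sum (s := (Finset.univ : Finset (Fin q))),
      ← Finset.sum_add_distrib, ← Finset.sum_sub_distrib]
    refine Finset.sum_congr rfl fun i _ => Finset.sum_congr rfl fun j _ =>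
      Finset.sum_congr rfl fun k _ => Finset.sum_congr rfl fun l _ => ?_
    simp only [← Finset.sum_mul]
    ring
  have e3 : ∀ s, (∑ i, ∑ j, ∑ k, ∑ l, c s j k * c s i l * H i j k l)
      = ∑ i, ∑ j, ∑ k, ∑ l, c s k i * c s j l * H i j k l := by
    intro s
    rw [Finset.sum_comm]
    refine Finset.sum_congr rfl fun i _ => Finset.sum_congr rfl fun j _ =>
      Finset.sum_congr rfl fun k _ => Finset.sum_congr rfl fun l _ => ?_
    rw [hc s i k, hH j i k l]; ring
  have e4 : ∀ s, (∑ i, ∑ j, ∑ k, ∑ l, c s i j * c s k l * H j k i l)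
      = ∑ i, ∑ j, ∑ k, ∑ l, c s k i * c s j l * H i j k l := by
    intro s
    exact (rot3 (fun i j k => ∑ l, c s k i * c s j l * H i j k l)).symm
  have hk' := Finset.sum_nonneg (fun s (_ : s ∈ (Finset.univ : Finset (Fin r))) => hk s)
  rw [e1, e2] at hv
  simp only [Finset.sum_add_distrib, e3, e4] at hk' hv
  rw [Finset.sum_sub_distrib, ← Finset.mul_sum]
  linarith

/-- Algebraic core of Proposition 3.1: if the transverse Weitzenböck curvature term
`∑_{i,j} Ric^∇_{ij}⟨e_i⌟α,e_j⌟α⟩ − (1/2)∑ R^∇_{ijkl}⟨(e_j∧e_i)⌟α,(e_l∧e_k)⌟α⟩` vanishes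
(as it does for a parallel basic `p`-form), then
`0 ≤ −∑_{i,j,l} R_{lilj}⟨e_i⌟α,e_j⌟α⟩ + (1/2)∑_{i,j,k,l} R_{ijkl}⟨(e_j∧e_i)⌟α,(e_l∧e_k)⌟α⟩
   + ∑_s ( |(∑_i A_{e_i}V_s∧e_i)⌟α|² − 2∑_i |A_{e_i}V_s⌟α|² )`. -/
theorem stmt9 {q r p : ℕ} (hp1 : 1 ≤ p) (hpq : p ≤ q)
    (e : OrthonormalBasis (Fin q) ℝ Q)
    {L : Type*} [NormedAddCommGroup L] [InnerProductSpace ℝ L]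
    (V : OrthonormalBasis (Fin r) ℝ L)
    (A : Q →ₗ[ℝ] Q →ₗ[ℝ] L) (hA : ∀ X Y : Q, A X Y = - A Y X)
    (R : Fin q → Fin q → Fin q → Fin q → ℝ)
    (hR1 : ∀ i j k l, R i j k l = - R j i k l)
    (hR2 : ∀ i j k l, R i j k l = - R i j l k)
    (hR3 : ∀ i j k l, R i j k l = R k l i j)
    (hBianchi : ∀ i j k l, R i j k l + R j k i l + R k i j l = 0)
    (α : AlternatingMap ℝ Q ℝ (Fin p))
    (hvanish :
      (∑ i : Fin q, ∑ j : Fin q,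
          Ricnab ⇑e R A i j * formInner ⇑e (iprod (e i) α) (iprod (e j) α))
        - (1 / 2 : ℝ) * ∑ i : Fin q, ∑ j : Fin q, ∑ k : Fin q, ∑ l : Fin q,
            Rnab ⇑e R A i j k l *
              formInner ⇑e (iprod (e j) (iprod (e i) α)) (iprod (e l) (iprod (e k) α))
        = 0) :
    0 ≤ -(∑ i : Fin q, ∑ j : Fin q, ∑ l : Fin q,
            R l i l j * formInner ⇑e (iprod (e i) α) (iprod (e j) α))
        + (1 / 2 : ℝ) * ∑ i : Fin q, ∑ j : Fin q, ∑ k : Fin q, ∑ l : Fin q,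
            R i j k l *
              formInner ⇑e (iprod (e j) (iprod (e i) α)) (iprod (e l) (iprod (e k) α))
        + ∑ s : Fin r,
            (formInner ⇑e
                (∑ i : Fin q, iprod (∑ j : Fin q, ⟪A (e i) (e j), V s⟫ • e j) (iprod (e i) α))
                (∑ i : Fin q, iprod (∑ j : Fin q, ⟪A (e i) (e j), V s⟫ • e j) (iprod (e i) α))
              - 2 * ∑ i : Fin q,
                  formInner ⇑e
                    (iprod (∑ j : Fin q, ⟪A (e i) (e j), V s⟫ • e j) α)
                    (iprod (∑ j : Fin q, ⟪A (e i) (e j), V s⟫ • e j) α)) := by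
  have hin : ∀ x y : L, ⟪x, y⟫ = ∑ s, ⟪x, V s⟫ * ⟪y, V s⟫ := by
    intro x y
    rw [← V.sum_inner_mul_inner x y]
    refine Finset.sum_congr rfl fun s _ => ?_
    rw [real_inner_comm y (V s)]
  have hN : ∀ s, formInner ⇑e
      (∑ i : Fin q, iprod (∑ j : Fin q, ⟪A (e i) (e j), V s⟫ • e j) (iprod (e i) α))
      (∑ i : Fin q, iprod (∑ j : Fin q, ⟪A (e i) (e j), V s⟫ • e j) (iprod (e i) α))
      = ∑ i, ∑ j, ∑ k, ∑ l, ⟪A (e i) (e j), V s⟫ * ⟪A (e k) (e l), V s⟫ *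
        formInner ⇑e (iprod (e j) (iprod (e i) α)) (iprod (e l) (iprod (e k) α)) := by
    intro s
    simp only [iprod_sum_smul]
    rw [← Fintype.sum_prod_type' (f := fun i j => ⟪A (e i) (e j), V s⟫ • iprod (e j) (iprod (e i) α)),
      formInner_sum_sum]
    simp only [Fintype.sum_prod_type]
  have hT : ∀ s i, formInner ⇑e
      (iprod (∑ j : Fin q, ⟪A (e i) (e j), V s⟫ • e j) α)
      (iprod (∑ j : Fin q, ⟪A (e i) (e j), V s⟫ • e j) α)
      = ∑ j, ∑ l, ⟪A (e i) (e j), V s⟫ * ⟪A (e i) (e l), V s⟫ *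
        formInner ⇑e (iprod (e j) α) (iprod (e l) α) := by
    intro s i
    rw [iprod_sum_smul, formInner_sum_sum]
  simp only [hN, hT]
  refine alg_core (fun s i j => ⟪A (e i) (e j), V s⟫) ?_ R
    (fun i j => formInner ⇑e (iprod (e i) α) (iprod (e j) α))
    (fun i j k l => formInner ⇑e (iprod (e j) (iprod (e i) α)) (iprod (e l) (iprod (e k) α)))
    ?_ ?_ ?_
  · intro s i j
    rw [hA, inner_neg_left]
  · intro i j k l
    rw [iprod_anti, formInner_neg_left]
  · simp only [← hin]
    exact hvanish
  · intro s
    exact key_nonneg hp1 ⇑e _ α
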